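/- For every τ in the genus-2 Siegel upper half space H₂, the even theta constants satisfy the identity (Σ_δ θ⁸[δ](τ))² = 4 Σ_δ θ¹⁶[δ](τ), where δ ranges over the ten even characteristics. -/

import Mathlib

open scoped BigOperators

namespace TwoLoop

/-- 2×2 complex matrices. -/
abbrev Mat2 := Matrix (Fin 2) (Fin 2) ℂ

/-- The genus-2 Siegel upper half space: symmetric 2×2 complex matrices with
positive definite imaginary part. -/
def SiegelH2 : Set Mat2 := {τ | τ.transpose = τ ∧ (τ.map Complex.im).PosDef}

/-- A (half-integer) theta characteristic `[a;b]`, recorded by its rows `a, b ∈ {0,1}²`. -/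
abbrev Char := (Fin 2 → ℤ) × (Fin 2 → ℤ)

/-- The theta constant `θ[a;b](τ) = Σ_{n ∈ ℤ²} exp(πi (n+a/2)ᵀ τ (n+a/2) + πi (n+a/2)·b)`. -/
noncomputable def theta (κ : Char) (τ : Mat2) : ℂ :=
  ∑' n : Fin 2 → ℤ,
    Complex.exp ((Real.pi : ℂ) * Complex.I *
      ((∑ i, ∑ j, ((n i : ℂ) + (κ.1 i : ℂ) / 2) * τ i j * ((n j : ℂ) + (κ.1 j : ℂ) / 2))
        + ∑ i, ((n i : ℂ) + (κ.1 i : ℂ) / 2) * (κ.2 i : ℂ)))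

/-- The ten even characteristics δ₁,…,δ₁₀. -/
def δev : Fin 10 → Char :=
  ![(![0,0], ![0,0]), (![0,0], ![0,1]), (![0,0], ![1,0]), (![0,0], ![1,1]),
    (![0,1], ![0,0]), (![0,1], ![1,0]), (![1,0], ![0,0]), (![1,0], ![0,1]),
    (![1,1], ![0,0]), (![1,1], ![1,1])]

/-- The six odd characteristics ν₁,…,ν₆. -/
def νodd : Fin 6 → Char :=
  ![(![0,1], ![0,1]), (![1,0], ![1,0]), (![0,1], ![1,1]),
    (![1,0], ![1,1]), (![1,1], ![0,1]), (![1,1], ![1,0])]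

/-- `Θ[ε](τ) = θ[ε;0](2τ)`. -/
noncomputable def Θf (ε : Fin 2 → ℤ) (τ : Mat2) : ℂ := theta (ε, ![0,0]) ((2 : ℂ) • τ)

noncomputable def P0 (τ : Mat2) : ℂ :=
  Θf ![0,0] τ ^ 4 + Θf ![0,1] τ ^ 4 + Θf ![1,0] τ ^ 4 + Θf ![1,1] τ ^ 4
noncomputable def P1 (τ : Mat2) : ℂ :=
  2 * (Θf ![0,0] τ ^ 2 * Θf ![0,1] τ ^ 2 + Θf ![1,0] τ ^ 2 * Θf ![1,1] τ ^ 2)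
noncomputable def P2 (τ : Mat2) : ℂ :=
  2 * (Θf ![0,0] τ ^ 2 * Θf ![1,0] τ ^ 2 + Θf ![0,1] τ ^ 2 * Θf ![1,1] τ ^ 2)
noncomputable def P3 (τ : Mat2) : ℂ :=
  2 * (Θf ![0,0] τ ^ 2 * Θf ![1,1] τ ^ 2 + Θf ![0,1] τ ^ 2 * Θf ![1,0] τ ^ 2)
noncomputable def P4 (τ : Mat2) : ℂ :=
  4 * (Θf ![0,0] τ * Θf ![0,1] τ * Θf ![1,0] τ * Θf ![1,1] τ)

/-- The vector `(P₀,…,P₄)`. -/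
noncomputable def Pv : Fin 5 → Mat2 → ℂ := ![P0, P1, P2, P3, P4]

open MvPolynomial in
/-- The Igusa quartic as a polynomial in `x₀,…,x₄`. -/
noncomputable def I4poly : MvPolynomial (Fin 5) ℂ :=
  X 4 ^ 4 + X 4 ^ 2 * X 0 ^ 2 - X 4 ^ 2 * X 1 ^ 2 - X 4 ^ 2 * X 2 ^ 2 - X 4 ^ 2 * X 3 ^ 2
    + X 1 ^ 2 * X 2 ^ 2 + X 1 ^ 2 * X 3 ^ 2 + X 2 ^ 2 * X 3 ^ 2
    - 2 * (X 0 * X 1 * X 2 * X 3)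

/-- The signature `⟨κ|λ⟩ = exp(πi(a_κ·b_λ − b_κ·a_λ))`. -/
noncomputable def sig (κ lam : Char) : ℂ :=
  Complex.exp ((Real.pi : ℂ) * Complex.I *
    (((∑ i, κ.1 i * lam.2 i : ℤ) : ℂ) - ((∑ i, κ.2 i * lam.1 i : ℤ) : ℂ)))

/-- Componentwise mod-2 sum of characteristics. -/
def addChar (κ lam : Char) : Char :=
  (fun i => (κ.1 i + lam.1 i) % 2, fun i => (κ.2 i + lam.2 i) % 2)

/-- For each even characteristic `δ_d`, the ordering `(k₁,…,k₆)` of `{1,…,6}` (0-indexed) whose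
first three entries form the triad of odd characteristics with `δ_d = ν_{k₁}+ν_{k₂}+ν_{k₃}`
and whose last three are the complementary indices. -/
def triad : Fin 10 → Fin 6 → Fin 6 :=
  ![![0,3,5,1,2,4], ![0,1,5,2,3,4], ![0,1,4,2,3,5], ![0,3,4,1,2,5], ![0,1,3,2,4,5],
    ![0,4,5,1,2,3], ![0,1,2,3,4,5], ![0,2,3,1,4,5], ![0,2,5,1,3,4], ![0,2,4,1,3,5]]

/-- D'Hoker–Phong's `Ξ₆[δ]`. -/
noncomputable def Xi6 (d : Fin 10) (τ : Mat2) : ℂ :=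
  ∑ i : Fin 3, ∑ j : Fin 3,
    if i < j then
      sig (νodd (triad d (Fin.castLE (by norm_num) i))) (νodd (triad d (Fin.castLE (by norm_num) j))) *
        ∏ m : Fin 3,
          theta (addChar (addChar (νodd (triad d (Fin.castLE (by norm_num) i)))
              (νodd (triad d (Fin.castLE (by norm_num) j))))
            (νodd (triad d (⟨m.1 + 3, by omega⟩ : Fin 6)))) τ ^ 4
    else 0

/-- The formal derivative `∂I₄/∂θ⁴[δ]` of the Igusa quartic with respect to the ten fourth
powers of the even theta constants, regarded as independent variables. -/
noncomputable def Dd (d : Fin 10) (τ : Mat2) : ℂ :=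
  (1 / 48 : ℂ) *
    (theta (δev d) τ ^ 4 * (∑ d' : Fin 10, theta (δev d') τ ^ 8) - 4 * theta (δev d) τ ^ 12)

/-- `f_δ = 2Ξ₆[δ] − ∂I₄/∂θ⁴[δ]`. -/
noncomputable def fδ (d : Fin 10) (τ : Mat2) : ℂ := 2 * Xi6 d τ - Dd d τ

/-- `Ψ₆`, the weight-6 modular form. -/
noncomputable def Ψ6 (τ : Mat2) : ℂ :=
  P0 τ ^ 3 - 9 * P0 τ * (P1 τ ^ 2 + P2 τ ^ 2 + P3 τ ^ 2 - 4 * P4 τ ^ 2)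
    + 54 * (P1 τ * P2 τ * P3 τ)

/-- `Ψ₁₀`, the weight-10 modular form. -/
noncomputable def Ψ10 (τ : Mat2) : ℂ := ∏ d : Fin 10, theta (δev d) τ ^ 2

/-- A characteristic is even when `a·b` is even. -/
def IsEvenChar (κ : Char) : Prop := (∑ i, κ.1 i * κ.2 i) % 2 = 0

/-- A characteristic is odd when `a·b` is odd. -/
def IsOddChar (κ : Char) : Prop := (∑ i, κ.1 i * κ.2 i) % 2 = 1

/-! Splitting pairs of lattice points according to the parity of their sum and difference, and
using the parallelogram law for the quadratic form, gives the duplication formula `θ[a;b](τ)² =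
Σ_ε (-1)^(ε·b) Θ[ε](τ) Θ[ε + a](τ)`. Squaring it in genus 2 makes each `θ⁴[δ]` a linear form in
`P₀, …, P₄`, and in these coordinates `(Σ_δ θ⁸[δ])² - 4 Σ_δ θ¹⁶[δ]` is 192 times the Igusa
quartic, which the `Pᵢ` satisfy identically as polynomials in the four `Θ[ε]`. -/

section Summability

variable {ι : Type*} [Fintype ι]

theorem summable_pi_prod {α : ι → Type*} {f : ∀ i, α i → ℝ} (hf : ∀ i, Summable (f i))
    (hf₀ : ∀ i x, 0 ≤ f i x) : Summable fun x : ∀ i, α i ↦ ∏ i, f i (x i) := by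
  classical
  refine summable_of_sum_le (c := ∏ i, ∑' x, f i x)
    (fun x ↦ Finset.prod_nonneg fun i _ ↦ hf₀ i (x i)) fun s ↦ ?_
  let box : Finset (∀ i, α i) := Fintype.piFinset fun i ↦ s.image (· i)
  have s_subset : s ⊆ box := fun x hx ↦
    Fintype.mem_piFinset.2 fun i ↦ Finset.mem_image_of_mem (· i) hx
  calc ∑ x ∈ s, ∏ i, f i (x i)
      ≤ ∑ x ∈ box, ∏ i, f i (x i) :=
        Finset.sum_le_sum_of_subset_of_nonneg s_subset fun x _ _ ↦
          Finset.prod_nonneg fun i _ ↦ hf₀ i (x i)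
    _ = ∏ i, ∑ x ∈ s.image (· i), f i x := (Finset.prod_univ_sum _ _).symm
    _ ≤ ∏ i, ∑' x, f i x :=
        Finset.prod_le_prod (fun i _ ↦ Finset.sum_nonneg fun x _ ↦ hf₀ i x)
          fun i _ ↦ (hf i).sum_le_tsum _ fun x _ ↦ hf₀ i x

theorem summable_exp_neg_mul_int_add_sq {c : ℝ} (hc : 0 < c) (s : ℝ) :
    Summable fun k : ℤ ↦ Real.exp (-(c * (k + s) ^ 2)) := by
  let z : ℂ := Complex.I * (c * s / Real.pi : ℝ)
  let t : ℂ := Complex.I * (c / Real.pi : ℝ)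
  have ht : 0 < t.im := by simpa [t] using div_pos hc Real.pi_pos
  have hz : Summable fun k : ℤ ↦ ‖jacobiTheta₂_term k z t‖ :=
    ((summable_jacobiTheta₂_term_iff z t).2 ht).norm
  refine (hz.mul_left (Real.exp (-(c * s ^ 2)))).congr fun k ↦ ?_
  rw [norm_jacobiTheta₂_term, ← Real.exp_add]
  simp only [z, t, Complex.I_mul_im, Complex.ofReal_re]
  congr 1
  field_simp
  ring

open scoped ComplexOrder MatrixOrder in
theorem exists_pos_posSemidef_sub_algebraMap {𝕜 : Type*} [RCLike 𝕜] [DecidableEq ι]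
    {A : Matrix ι ι 𝕜} (hA : A.PosDef) :
    ∃ c : ℝ, 0 < c ∧ (A - algebraMap ℝ (Matrix ι ι 𝕜) c).PosSemidef := by
  cases isEmpty_or_nonempty ι
  · exact ⟨1, one_pos, by rw [Subsingleton.elim (A - _) 0]; exact .zero⟩
  · exact (CFC.exists_pos_algebraMap_le_iff hA.1).2 fun x hx ↦ hA.isStrictlyPositive.spectrum_pos hx

theorem summable_exp_neg_quadratic {Y : Matrix ι ι ℝ} (hY : Y.PosDef) (s : ι → ℝ) :
    Summable fun n : ι → ℤ ↦
      Real.exp (-∑ i, ∑ j, (n i + s i) * Y i j * (n j + s j)) := by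
  classical
  obtain ⟨c, hc, hYc⟩ := exists_pos_posSemidef_sub_algebraMap hY
  have coercive (v : ι → ℝ) : ∑ i, c * v i ^ 2 ≤ ∑ i, ∑ j, v i * Y i j * v j := by
    have h := hYc.dotProduct_mulVec_nonneg v
    rw [Algebra.algebraMap_eq_smul_one, Matrix.sub_mulVec, Matrix.smul_mulVec, Matrix.one_mulVec,
      dotProduct_sub, dotProduct_smul, sub_nonneg] at h
    simpa [dotProduct, Matrix.mulVec, Finset.mul_sum, sq, mul_assoc] using h
  refine Summable.of_nonneg_of_le (fun _ ↦ (Real.exp_pos _).le) (fun n ↦ ?_)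
    (summable_pi_prod (fun i ↦ summable_exp_neg_mul_int_add_sq hc (s i))
      fun _ _ ↦ (Real.exp_pos _).le)
  rw [← Real.exp_sum, Finset.sum_neg_distrib]
  exact Real.exp_le_exp.2 (neg_le_neg (coercive fun i ↦ n i + s i))

end Summability

section ThetaConst

variable {ι : Type*} [Fintype ι]

/-- The `n`-th term of the theta constant `θ[a;b](τ)`, for period matrices of arbitrary size. -/
noncomputable def thetaTerm (a b : ι → ℤ) (τ : Matrix ι ι ℂ) (n : ι → ℤ) : ℂ :=
  Complex.exp ((Real.pi : ℂ) * Complex.I *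
    ((∑ i, ∑ j, ((n i : ℂ) + (a i : ℂ) / 2) * τ i j * ((n j : ℂ) + (a j : ℂ) / 2))
      + ∑ i, ((n i : ℂ) + (a i : ℂ) / 2) * (b i : ℂ)))

/-- The theta constant `θ[a;b](τ)` of arbitrary genus; `theta` is the case `ι = Fin 2`. -/
noncomputable def thetaConst (a b : ι → ℤ) (τ : Matrix ι ι ℂ) : ℂ :=
  ∑' n : ι → ℤ, thetaTerm a b τ n

theorem theta_eq_thetaConst (κ : Char) (τ : Mat2) : theta κ τ = thetaConst κ.1 κ.2 τ := rfl

theorem norm_thetaTerm (a b : ι → ℤ) (τ : Matrix ι ι ℂ) (n : ι → ℤ) :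
    ‖thetaTerm a b τ n‖ = Real.exp (-∑ i, ∑ j,
      ((n i : ℝ) + a i / 2) * (Real.pi • τ.map Complex.im) i j * ((n j : ℝ) + a j / 2)) := by
  have real_point (i : ι) : (n i : ℂ) + (a i : ℂ) / 2 = ((n i + a i / 2 : ℝ) : ℂ) := by
    push_cast
    rfl
  rw [thetaTerm, Complex.norm_exp, mul_assoc, Complex.re_ofReal_mul, Complex.I_mul_re]
  simp only [real_point, Complex.add_im, Complex.im_sum, Complex.im_mul_ofReal,
    Complex.im_ofReal_mul, Complex.intCast_im, mul_zero, Finset.sum_const_zero, add_zero, mul_neg,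
    Finset.mul_sum, Matrix.smul_apply, Matrix.map_apply, smul_eq_mul]
  congr! 4
  ring_nf

theorem summable_norm_thetaTerm {τ : Matrix ι ι ℂ} (hτ : (τ.map Complex.im).PosDef)
    (a b : ι → ℤ) : Summable fun n ↦ ‖thetaTerm a b τ n‖ := by
  simp only [norm_thetaTerm]
  exact summable_exp_neg_quadratic (hτ.smul Real.pi_pos) fun i ↦ a i / 2

theorem thetaConst_congr_modEq {a a' : ι → ℤ} (h : ∀ i, a i ≡ a' i [ZMOD 2]) (b : ι → ℤ)
    (τ : Matrix ι ι ℂ) : thetaConst a b τ = thetaConst a' b τ := by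
  choose c hc using fun i ↦ (h i).dvd
  rw [thetaConst, ← (Equiv.addRight c).tsum_eq]
  refine tsum_congr fun n ↦ ?_
  have translate (i : ι) : ((n i + c i : ℤ) : ℂ) + (a i : ℂ) / 2 = n i + (a' i : ℂ) / 2 := by
    rw [eq_add_of_sub_eq (hc i)]
    push_cast
    ring
  simp only [thetaTerm, Equiv.coe_addRight, Pi.add_apply, translate]

/-- The parametrization `n = p + q + ε`, `m = p - q - a` of pairs `(n, m)` of lattice points by a
residue class `ε` modulo `2` and two lattice points `p`, `q`. It turns the sum and difference of
`n + a/2` and `m + a/2` into `2 (p + ε/2)` and `2 (q + (ε + a)/2)`. -/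
def latticePairEquiv (a : ι → ℤ) :
    (ι → Fin 2) × (ι → ℤ) × (ι → ℤ) ≃ (ι → ℤ) × (ι → ℤ) where
  toFun x := (fun i ↦ x.2.1 i + x.2.2 i + (x.1 i).val, fun i ↦ x.2.1 i - x.2.2 i - a i)
  invFun y := (fun i ↦ ⟨((y.1 i + y.2 i + a i) % 2).toNat, by omega⟩,
    fun i ↦ (y.1 i + y.2 i + a i) / 2,
    fun i ↦ y.1 i - (y.1 i + y.2 i + a i) % 2 - (y.1 i + y.2 i + a i) / 2)
  left_inv x := by
    ext i <;> dsimp only <;> omega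
  right_inv y := by
    ext i <;> dsimp only <;> omega

theorem exp_pi_mul_I_mul_intCast (k : ℤ) :
    Complex.exp ((Real.pi : ℂ) * Complex.I * k) = (-1) ^ k := by
  rw [mul_comm, Complex.exp_int_mul, Complex.exp_pi_mul_I]

theorem thetaTerm_mul_thetaTerm_latticePairEquiv (a b : ι → ℤ) (τ : Matrix ι ι ℂ)
    (ε : ι → Fin 2) (p : (ι → ℤ) × (ι → ℤ)) :
    thetaTerm a b τ (latticePairEquiv a (ε, p)).1 *
        thetaTerm a b τ (latticePairEquiv a (ε, p)).2 =
      (-1) ^ (∑ i, (ε i).val * b i) *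
        (thetaTerm (fun i ↦ (ε i).val) 0 ((2 : ℂ) • τ) p.1 *
          thetaTerm (fun i ↦ (ε i).val + a i) 0 ((2 : ℂ) • τ) p.2) := by
  have sign_eq : (-1 : ℂ) ^ (∑ i, ((ε i).val : ℤ) * b i) =
      Complex.exp ((Real.pi : ℂ) * Complex.I * (∑ i, (2 * p.1 i + (ε i).val) * b i : ℤ)) := by
    rw [exp_pi_mul_I_mul_intCast]
    simp only [add_mul, Finset.sum_add_distrib, mul_assoc, ← Finset.mul_sum]
    rw [zpow_add₀ (neg_ne_zero.2 one_ne_zero), (even_two_mul _).neg_one_zpow, one_mul]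
  rw [sign_eq]
  simp only [thetaTerm, ← Complex.exp_add, latticePairEquiv, Equiv.coe_fn_mk, Matrix.smul_apply,
    smul_eq_mul, Pi.zero_apply, Int.cast_zero, mul_zero, Finset.sum_const_zero, add_zero,
    Int.cast_sum, ← mul_add]
  congr 2
  rw [add_add_add_comm, add_comm]
  simp only [← Finset.sum_add_distrib]
  congr! 3 <;> push_cast <;> ring

theorem thetaConst_sq [DecidableEq ι] {τ : Matrix ι ι ℂ} (hτ : (τ.map Complex.im).PosDef)
    (a b : ι → ℤ) :
    thetaConst a b τ ^ 2 = ∑ ε : ι → Fin 2, (-1) ^ (∑ i, (ε i).val * b i) *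
      (thetaConst (fun i ↦ (ε i).val) 0 ((2 : ℂ) • τ) *
        thetaConst (fun i ↦ (ε i).val + a i) 0 ((2 : ℂ) • τ)) := by
  have hτ₂ : (((2 : ℂ) • τ).map Complex.im).PosDef := by
    convert hτ.smul (two_pos (α := ℝ)) using 1
    ext i j
    simp
  have summable_one := summable_norm_thetaTerm hτ a b
  have summable_two (c : ι → ℤ) := summable_norm_thetaTerm hτ₂ c 0
  have summable_pair := (latticePairEquiv a).summable_iff.2
    (summable_mul_of_summable_norm summable_one summable_one)
  rw [sq, thetaConst, tsum_mul_tsum_of_summable_norm summable_one summable_one,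
    ← (latticePairEquiv a).tsum_eq]
  refine summable_pair.tsum_prod.trans ((tsum_fintype _).trans ?_)
  refine Finset.sum_congr rfl fun ε _ ↦ ?_
  simp only [Function.comp_apply, thetaTerm_mul_thetaTerm_latticePairEquiv]
  rw [tsum_mul_left, thetaConst, thetaConst,
    tsum_mul_tsum_of_summable_norm (summable_two _) (summable_two _)]

end ThetaConst

section GenusTwo

theorem Θf_eq_thetaConst (ε : Fin 2 → ℤ) (τ : Mat2) :
    Θf ε τ = thetaConst ε 0 ((2 : ℂ) • τ) :=
  congrArg (thetaConst ε · _) (by decide : (![0, 0] : Fin 2 → ℤ) = 0)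

theorem Θf_congr_modEq {ε ε' : Fin 2 → ℤ} (h : ∀ i, ε i ≡ ε' i [ZMOD 2]) (τ : Mat2) :
    Θf ε τ = Θf ε' τ :=
  thetaConst_congr_modEq h _ _

theorem theta_sq {τ : Mat2} (hτ : (τ.map Complex.im).PosDef) (a₀ a₁ b₀ b₁ : ℤ) :
    theta (![a₀, a₁], ![b₀, b₁]) τ ^ 2 =
      Θf ![0, 0] τ * Θf ![a₀, a₁] τ + (-1) ^ b₁ * (Θf ![0, 1] τ * Θf ![a₀, 1 + a₁] τ) +
        (-1) ^ b₀ * (Θf ![1, 0] τ * Θf ![1 + a₀, a₁] τ) +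
        (-1) ^ (b₀ + b₁) * (Θf ![1, 1] τ * Θf ![1 + a₀, 1 + a₁] τ) := by
  have residue_eq (e₀ e₁ : Fin 2) : (fun i ↦ ((![e₀, e₁] i).val : ℤ)) = ![(e₀.val : ℤ), e₁.val] :=
    (FinVec.etaExpand_eq _).symm
  have residue_add_eq (e₀ e₁ : Fin 2) : (fun i ↦ ((![e₀, e₁] i).val : ℤ) + ![a₀, a₁] i) =
      ![e₀.val + a₀, e₁.val + a₁] := (FinVec.etaExpand_eq _).symm
  rw [theta_eq_thetaConst, thetaConst_sq hτ, ← (finTwoArrowEquiv (Fin 2)).symm.sum_comp]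
  simp only [Fintype.sum_prod_type, Fin.sum_univ_two, ← Θf_eq_thetaConst,
    finTwoArrowEquiv_symm_apply, residue_eq, residue_add_eq]
  simp [add_assoc]

/-- The ten linear forms in `(P₀,…,P₄)` which equal the fourth powers `θ⁴[δ₁],…,θ⁴[δ₁₀]`. -/
def thetaFourthForm (x : Fin 5 → ℂ) : Fin 10 → ℂ :=
  ![x 0 + x 1 + x 2 + x 3, x 0 - x 1 + x 2 - x 3, x 0 + x 1 - x 2 - x 3, x 0 - x 1 - x 2 + x 3,
    2 * (x 1 + x 4), 2 * (x 1 - x 4), 2 * (x 2 + x 4), 2 * (x 2 - x 4),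
    2 * (x 3 + x 4), 2 * (x 3 - x 4)]

theorem theta_δev_pow_four {τ : Mat2} (hτ : (τ.map Complex.im).PosDef) (d : Fin 10) :
    theta (δev d) τ ^ 4 = thetaFourthForm (fun i ↦ Pv i τ) d := by
  have Θ02 : Θf ![0, 2] τ = Θf ![0, 0] τ := Θf_congr_modEq (by decide) τ
  have Θ20 : Θf ![2, 0] τ = Θf ![0, 0] τ := Θf_congr_modEq (by decide) τ
  have Θ12 : Θf ![1, 2] τ = Θf ![1, 0] τ := Θf_congr_modEq (by decide) τ
  have Θ21 : Θf ![2, 1] τ = Θf ![0, 1] τ := Θf_congr_modEq (by decide) τ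
  have Θ22 : Θf ![2, 2] τ = Θf ![0, 0] τ := Θf_congr_modEq (by decide) τ
  have pow_four_eq (t : ℂ) : t ^ 4 = (t ^ 2) ^ 2 := by ring
  rw [pow_four_eq]
  fin_cases d <;>
    simp only [δev, thetaFourthForm, Pv, P0, P1, P2, P3, P4, theta_sq hτ, one_add_one_eq_two,
      add_zero, zpow_ofNat, Θ02, Θ20, Θ12, Θ21, Θ22, Fin.zero_eta, Fin.mk_one, Fin.reduceFinMk,
      Matrix.cons_val] <;>
    ring

theorem eval_Pv_I4poly (τ : Mat2) : MvPolynomial.eval (fun i ↦ Pv i τ) I4poly = 0 := by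
  simp only [I4poly, Pv, P0, P1, P2, P3, P4, map_sub, map_add, map_mul, map_pow, map_ofNat,
    MvPolynomial.eval_X, Matrix.cons_val]
  ring

theorem sq_sum_sq_sub_four_mul_sum_pow_four_thetaFourthForm (x : Fin 5 → ℂ) :
    (∑ d, thetaFourthForm x d ^ 2) ^ 2 - 4 * ∑ d, thetaFourthForm x d ^ 4 =
      192 * MvPolynomial.eval x I4poly := by
  simp only [I4poly, thetaFourthForm, Fin.sum_univ_ofNat, map_sub, map_add, map_mul, map_pow,
    map_ofNat, MvPolynomial.eval_X, Matrix.cons_val]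
  ring

end GenusTwo

theorem statement3_general {τ : Mat2} (hτ : (τ.map Complex.im).PosDef) :
    (∑ d : Fin 10, theta (δev d) τ ^ 8) ^ 2 = 4 * ∑ d : Fin 10, theta (δev d) τ ^ 16 := by
  have pow_eight (d : Fin 10) :
      theta (δev d) τ ^ 8 = thetaFourthForm (fun i ↦ Pv i τ) d ^ 2 := by
    rw [← theta_δev_pow_four hτ, ← pow_mul]
  have pow_sixteen (d : Fin 10) :
      theta (δev d) τ ^ 16 = thetaFourthForm (fun i ↦ Pv i τ) d ^ 4 := by
    rw [← theta_δev_pow_four hτ, ← pow_mul]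
  simp only [pow_eight, pow_sixteen]
  rw [← sub_eq_zero, sq_sum_sq_sub_four_mul_sum_pow_four_thetaFourthForm, eval_Pv_I4poly, mul_zero]

/-- `(Σ_δ θ⁸[δ])² = 4 Σ_δ θ¹⁶[δ]` on `H₂`. -/
theorem statement3 : ∀ τ ∈ SiegelH2,
    (∑ d : Fin 10, theta (δev d) τ ^ 8) ^ 2 = 4 * ∑ d : Fin 10, theta (δev d) τ ^ 16 :=
  fun _ hτ ↦ statement3_general hτ.2

end TwoLoop
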